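/- Fix reals L > 0, κ ≥ 0, P ≥ 0, Q ≥ 0, G ≥ 0, an integer T ≥ 1, and nonnegative real sequences (u_t), (v_t), (w_t), (G_t) for t = 0, …, T with w_0 = 0, v_0 ≤ 2L u_0, and u_0 > 0. Set σ̄ := √(P + 4κQ) and assume σ̄ > 0. Define the constant step size γ := min{ 1/(24L), √(270 u_0) / (2 σ̄ √(5760 L T)) } and β := 1 − 24Lγ, and suppose that for every t < T: (R1) u_{t+1} ≤ u_t − (γ/2)(1 − 4γL) G_t + γ(1 + 2γL) v_t + γ(1 + γL) κ w_t; (R2) v_{t+1} ≤ β²(1 + γL)(1 + 4γL) v_t + 4γL(1 + γL) β² G_t + (1 − β)² P + 2γL(1 + γL) β² κ w_t; (R3) w_{t+1} ≤ β w_t + 2(1 − β)² Q + (1 − β) G². Then (1/T) Σ_{t=0}^{T−1} G_t ≤ 480 κ G² + √(1555200 L u_0) · σ̄ / √T + 270 L u_0 / T. -/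

import Mathlib

/-!
The Lyapunov function `V t = 20 L u t + v t + κ w t` absorbs all three recursions: when
`γ L ≤ 1/24`, the momentum `β = 1 - 24 γ L` contracts `v` and `w` strongly enough to pay for their
contribution to the descent of `u`, leaving
`V (t + 1) + 6 γ L Gs t ≤ V t + (1 - β)² (P + 2 κ Q) + (1 - β) κ G²`.
Telescoping bounds the average of `Gs` by `11 u₀ / (3 γ T) + 96 γ L (P + 2 κ Q) + 4 κ G²`. The
second entry of the minimum defining `γ` makes the first two terms of order `σ̄ √(L u₀ / T)`, and
the first entry costs only `O(L u₀ / T)` because `1 / min a b ≤ 1 / a + 1 / b`.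
-/

theorem add_sum_range_le_add_sum_range {M : Type*} [AddCommMonoid M] [PartialOrder M]
    [IsOrderedAddMonoid M] {Φ a c : ℕ → M} {n : ℕ}
    (h : ∀ t < n, Φ (t + 1) + a t ≤ Φ t + c t) :
    Φ n + ∑ t ∈ Finset.range n, a t ≤ Φ 0 + ∑ t ∈ Finset.range n, c t := by
  induction n with
  | zero => simp
  | succ n ih =>
    rw [Finset.sum_range_succ, Finset.sum_range_succ]
    calc Φ (n + 1) + (∑ t ∈ Finset.range n, a t + a n)
        = Φ (n + 1) + a n + ∑ t ∈ Finset.range n, a t := by abel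
      _ ≤ Φ n + c n + ∑ t ∈ Finset.range n, a t :=
        add_le_add_left (h n n.lt_succ_self) _
      _ = Φ n + ∑ t ∈ Finset.range n, a t + c n := by abel
      _ ≤ Φ 0 + ∑ t ∈ Finset.range n, c t + c n :=
        add_le_add_left (ih fun t ht => h t (ht.trans n.lt_succ_self)) _
      _ = Φ 0 + (∑ t ∈ Finset.range n, c t + c n) := add_assoc _ _ _

section MinStep

variable {K : Type*} [Field K] [LinearOrder K] [IsStrictOrderedRing K] {a b A B : K}

theorem inv_min_le_inv_add_inv (ha : 0 ≤ a) (hb : 0 ≤ b) : (min a b)⁻¹ ≤ a⁻¹ + b⁻¹ := by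
  rcases min_choice a b with h | h <;> rw [h]
  · exact le_add_of_nonneg_right (inv_nonneg.2 hb)
  · exact le_add_of_nonneg_left (inv_nonneg.2 ha)

theorem div_min_add_mul_min_le (hA : 0 ≤ A) (hB : 0 ≤ B) (ha : 0 ≤ a) (hb : 0 ≤ b) :
    A / min a b + B * min a b ≤ A / a + A / b + B * b := by
  simp only [div_eq_mul_inv, ← mul_add]
  gcongr
  · exact inv_min_le_inv_add_inv ha hb
  · exact min_le_right a b

end MinStep

section BalancedStep

variable {a b T : ℝ} (σ : ℝ)

theorem div_div_sqrt_div_sqrt_mul (ha : 0 ≤ a) (hb : 0 ≤ b) :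
    a / T / (√a / (2 * σ * √(b * T))) = 2 * (√(a * b) * σ / √T) := by
  rw [Real.sqrt_mul hb, Real.sqrt_mul ha]
  calc a / T / (√a / (2 * σ * (√b * √T))) = 2 * (a / √a * √b * σ * (√T / T)) := by
        simp only [div_eq_mul_inv, mul_inv, inv_inv]; ring
    _ = 2 * (√a * √b * σ / √T) := by
        rw [Real.div_sqrt, Real.sqrt_div_self']; ring

theorem mul_sq_mul_sqrt_div_sqrt_mul (ha : 0 ≤ a) (hb : 0 ≤ b) :
    b * σ ^ 2 * (√a / (2 * σ * √(b * T))) = √(a * b) * σ / √T / 2 := by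
  rw [Real.sqrt_mul hb, Real.sqrt_mul ha]
  calc b * σ ^ 2 * (√a / (2 * σ * (√b * √T))) = √a * (b / √b) * (σ * σ * σ⁻¹) / √T / 2 := by
        simp only [div_eq_mul_inv, mul_inv]; ring
    _ = √a * √b * σ / √T / 2 := by
        rw [Real.div_sqrt, mul_self_mul_inv]

end BalancedStep

theorem tuned_step_cost_le {L u σ T : ℝ} (hL : 0 < L) (hu : 0 ≤ u) (hσ : 0 ≤ σ) (hT : 0 ≤ T) :
    let γ := min (1 / (24 * L)) (√(270 * u) / (2 * σ * √(5760 * L * T)))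
    11 / 3 * (u / T) / γ + 96 * L * σ ^ 2 * γ ≤
      √(1555200 * L * u) * σ / √T + 270 * L * u / T := by
  intro γ
  have hsqrt : √(1555200 * L * u) = √(270 * u * (5760 * L)) := by congr 1; ring
  have hdiv := div_div_sqrt_div_sqrt_mul (a := 270 * u) (b := 5760 * L) (T := T) σ
    (by positivity) (by positivity)
  have hmul := mul_sq_mul_sqrt_div_sqrt_mul (a := 270 * u) (b := 5760 * L) (T := T) σ
    (by positivity) (by positivity)
  rw [← hsqrt] at hdiv hmul
  set b := √(270 * u) / (2 * σ * √(5760 * L * T))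
  set N := √(1555200 * L * u) * σ / √T
  have hN : 0 ≤ N := by positivity
  have hLuT : 0 ≤ L * u / T := by positivity
  calc 11 / 3 * (u / T) / γ + 96 * L * σ ^ 2 * γ
      ≤ 11 / 3 * (u / T) / (1 / (24 * L)) + 11 / 3 * (u / T) / b + 96 * L * σ ^ 2 * b :=
        div_min_add_mul_min_le (by positivity) (by positivity) (by positivity) (by positivity)
    _ = 88 * (L * u / T) + 11 / 810 * (270 * u / T / b) + 1 / 60 * (5760 * L * σ ^ 2 * b) := by
        rw [div_div_eq_mul_div]; ring
    _ = 88 * (L * u / T) + (11 / 405 + 1 / 120) * N := by rw [hdiv, hmul]; ring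
    _ ≤ N + 270 * (L * u / T) := by linarith
    _ = N + 270 * L * u / T := by ring

section MomentumCoefficients

variable {x : ℝ}

theorem momentum_sq_mul_growth_le (hx₀ : 0 ≤ x) (hx : x ≤ 1 / 24) :
    (1 - 24 * x) ^ 2 * (1 + x) * (1 + 4 * x) ≤ 1 - 24 * x := by
  have hβ : 0 ≤ 1 - 24 * x := by linarith
  have hcontract : (1 - 24 * x) * ((1 + x) * (1 + 4 * x)) ≤ 1 := by
    have : 0 ≤ 19 * x + 116 * x ^ 2 + 96 * x ^ 3 := by positivity
    linarith
  calc (1 - 24 * x) ^ 2 * (1 + x) * (1 + 4 * x)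
      = (1 - 24 * x) * ((1 - 24 * x) * ((1 + x) * (1 + 4 * x))) := by ring
    _ ≤ 1 - 24 * x := mul_le_of_le_one_right hβ hcontract

theorem momentum_sq_mul_le (hx₀ : 0 ≤ x) (hx : x ≤ 1 / 24) :
    (1 - 24 * x) ^ 2 * (1 + x) ≤ 1 - 24 * x :=
  (le_mul_of_one_le_right (by positivity) (by linarith)).trans (momentum_sq_mul_growth_le hx₀ hx)

theorem deviation_coeff_le_one (hx₀ : 0 ≤ x) (hx : x ≤ 1 / 24) :
    20 * x * (1 + 2 * x) + (1 - 24 * x) ^ 2 * (1 + x) * (1 + 4 * x) ≤ 1 := by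
  have := momentum_sq_mul_growth_le hx₀ hx
  have := mul_le_mul_of_nonneg_left hx hx₀
  linarith

theorem drift_coeff_le_one (hx₀ : 0 ≤ x) (hx : x ≤ 1 / 24) :
    20 * x * (1 + x) + 2 * x * (1 + x) * (1 - 24 * x) ^ 2 + (1 - 24 * x) ≤ 1 := by
  have := mul_le_mul_of_nonneg_left (momentum_sq_mul_le hx₀ hx) hx₀
  have := sq_nonneg x
  linarith

theorem gradient_coeff_le (hx₀ : 0 ≤ x) (hx : x ≤ 1 / 24) :
    4 * x * (1 + x) * (1 - 24 * x) ^ 2 + 6 * x ≤ 10 * x * (1 - 4 * x) := by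
  have := mul_le_mul_of_nonneg_left (momentum_sq_mul_le hx₀ hx) hx₀
  have := sq_nonneg x
  linarith

end MomentumCoefficients

/-- The one-step recursions (R1)–(R3) of the CafCor analysis over a horizon `T`: descent of the
suboptimality gap `u`, and growth of the momentum deviation `v` and of the momentum drift `w`,
driven by the squared gradient norms `Gs`. The step size `γ` and the momentum `β` are independent
parameters here. -/
structure CafCorRecursion (L κ P Q G γ β : ℝ) (T : ℕ) (u v w Gs : ℕ → ℝ) : Prop where
  descent : ∀ t < T, u (t + 1) ≤ u t - (γ / 2) * (1 - 4 * γ * L) * Gs t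
    + γ * (1 + 2 * γ * L) * v t + γ * (1 + γ * L) * κ * w t
  deviation : ∀ t < T, v (t + 1) ≤ β ^ 2 * (1 + γ * L) * (1 + 4 * γ * L) * v t
    + 4 * γ * L * (1 + γ * L) * β ^ 2 * Gs t + (1 - β) ^ 2 * P
    + 2 * γ * L * (1 + γ * L) * β ^ 2 * κ * w t
  drift : ∀ t < T, w (t + 1) ≤ β * w t + 2 * (1 - β) ^ 2 * Q + (1 - β) * G ^ 2

/-- The Lyapunov function of the CafCor recursions at a state with suboptimality gap `u`, momentum
deviation `v` and momentum drift `w`. The weight `20` is chosen so that one step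
multiplies neither `v` nor `κ w` by more than `1`, for every step size `γ ≤ 1 / (24 L)`. -/
def cafCorLyapunov (L κ u v w : ℝ) : ℝ := 20 * L * u + v + κ * w

namespace CafCorRecursion

variable {L κ P Q G γ β : ℝ} {T : ℕ} {u v w Gs : ℕ → ℝ}

theorem lyapunov_succ_add_le (h : CafCorRecursion L κ P Q G γ β T u v w Gs)
    (hL : 0 ≤ L) (hκ : 0 ≤ κ) (hγ : 0 ≤ γ) (hγL : γ * L ≤ 1 / 24) (hβ : β = 1 - 24 * L * γ)
    {t : ℕ} (ht : t < T) (hv : 0 ≤ v t) (hw : 0 ≤ w t) (hGs : 0 ≤ Gs t) :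
    cafCorLyapunov L κ (u (t + 1)) (v (t + 1)) (w (t + 1)) + 6 * (γ * L) * Gs t
      ≤ cafCorLyapunov L κ (u t) (v t) (w t)
        + ((1 - β) ^ 2 * (P + 2 * κ * Q) + (1 - β) * (κ * G ^ 2)) := by
  have hx : 0 ≤ γ * L := mul_nonneg hγ hL
  have hβx : β = 1 - 24 * (γ * L) := by rw [hβ]; ring
  have hdescent := mul_le_mul_of_nonneg_left (h.descent t ht) (by positivity : 0 ≤ 20 * L)
  have hdeviation := h.deviation t ht
  have hdrift := mul_le_mul_of_nonneg_left (h.drift t ht) hκ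
  have hcoeff_v := mul_le_mul_of_nonneg_right (deviation_coeff_le_one hx hγL) hv
  have hcoeff_w := mul_le_mul_of_nonneg_right (drift_coeff_le_one hx hγL) (mul_nonneg hκ hw)
  have hcoeff_G := mul_le_mul_of_nonneg_right (gradient_coeff_le hx hγL) hGs
  rw [← hβx] at hcoeff_v hcoeff_w hcoeff_G
  unfold cafCorLyapunov
  linarith

theorem sum_le (h : CafCorRecursion L κ P Q G γ β T u v w Gs)
    (hL : 0 ≤ L) (hκ : 0 ≤ κ) (hγ : 0 ≤ γ) (hγL : γ * L ≤ 1 / 24) (hβ : β = 1 - 24 * L * γ)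
    (hu : 0 ≤ u T) (hv : ∀ t ≤ T, 0 ≤ v t) (hw : ∀ t ≤ T, 0 ≤ w t) (hGs : ∀ t < T, 0 ≤ Gs t) :
    6 * (γ * L) * ∑ t ∈ Finset.range T, Gs t ≤ cafCorLyapunov L κ (u 0) (v 0) (w 0)
      + T * ((1 - β) ^ 2 * (P + 2 * κ * Q) + (1 - β) * (κ * G ^ 2)) := by
  have htelescope := add_sum_range_le_add_sum_range
    (Φ := fun t => cafCorLyapunov L κ (u t) (v t) (w t)) fun t ht =>
      h.lyapunov_succ_add_le hL hκ hγ hγL hβ ht (hv t ht.le) (hw t ht.le) (hGs t ht)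
  have hnonneg : 0 ≤ cafCorLyapunov L κ (u T) (v T) (w T) := by
    have := hv T le_rfl
    have := hw T le_rfl
    unfold cafCorLyapunov
    positivity
  rw [← Finset.mul_sum, Finset.sum_const, Finset.card_range, nsmul_eq_mul] at htelescope
  exact (le_add_of_nonneg_left hnonneg).trans htelescope

theorem average_le (h : CafCorRecursion L κ P Q G γ β T u v w Gs)
    (hL : 0 < L) (hκ : 0 ≤ κ) (hγ : 0 < γ) (hγL : γ * L ≤ 1 / 24) (hβ : β = 1 - 24 * L * γ)
    (hT : 1 ≤ T) (hu : 0 ≤ u T) (hv : ∀ t ≤ T, 0 ≤ v t) (hw : ∀ t ≤ T, 0 ≤ w t)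
    (hGs : ∀ t < T, 0 ≤ Gs t) (hw₀ : w 0 = 0) (hv₀ : v 0 ≤ 2 * L * u 0) :
    (1 / T : ℝ) * ∑ t ∈ Finset.range T, Gs t
      ≤ 11 / 3 * (u 0 / T) / γ + 96 * L * (P + 2 * κ * Q) * γ + 4 * κ * G ^ 2 := by
  have hT₀ : (0 : ℝ) < T := by exact_mod_cast hT
  have hinit : cafCorLyapunov L κ (u 0) (v 0) (w 0) ≤ 22 * L * u 0 := by
    rw [cafCorLyapunov, hw₀]; linarith
  have hscale : 0 < 6 * (γ * L) * T := mul_pos (by positivity) hT₀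
  refine le_of_mul_le_mul_left ?_ hscale
  calc 6 * (γ * L) * T * (1 / T * ∑ t ∈ Finset.range T, Gs t)
      = 6 * (γ * L) * ∑ t ∈ Finset.range T, Gs t := by field_simp
    _ ≤ cafCorLyapunov L κ (u 0) (v 0) (w 0)
          + T * ((1 - β) ^ 2 * (P + 2 * κ * Q) + (1 - β) * (κ * G ^ 2)) :=
        h.sum_le hL.le hκ hγ.le hγL hβ hu hv hw hGs
    _ ≤ 22 * L * u 0 + T * ((1 - β) ^ 2 * (P + 2 * κ * Q) + (1 - β) * (κ * G ^ 2)) := by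
        gcongr
    _ = 6 * (γ * L) * T
          * (11 / 3 * (u 0 / T) / γ + 96 * L * (P + 2 * κ * Q) * γ + 4 * κ * G ^ 2) := by
        rw [hβ]; field_simp; ring

end CafCorRecursion

/-- Convergence of the CafCor recursions in the non-convex case: with the constant step size
`γ = min{1/(24L), √(270 u₀)/(2 σ̄ √(5760 L T))}` and momentum `β = 1 − 24Lγ`, the recursions
(R1)–(R3) yield `(1/T) ∑_{t<T} G t ≤ 480 κ G² + √(1555200 L u₀) σ̄/√T + 270 L u₀/T`, where
`σ̄ = √(P + 4κQ)`. -/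
theorem stmt_16 (L κ P Q G : ℝ) (hL : 0 < L) (hκ : 0 ≤ κ) (hP : 0 ≤ P) (hQ : 0 ≤ Q)
    (hG : 0 ≤ G) (T : ℕ) (hT : 1 ≤ T)
    (u v w Gs : ℕ → ℝ)
    (hu : ∀ t ≤ T, 0 ≤ u t) (hv : ∀ t ≤ T, 0 ≤ v t) (hw : ∀ t ≤ T, 0 ≤ w t)
    (hGs : ∀ t ≤ T, 0 ≤ Gs t)
    (hw0 : w 0 = 0) (hv0 : v 0 ≤ 2 * L * u 0) (hu0 : 0 < u 0)
    (σbar : ℝ) (hσbar : σbar = Real.sqrt (P + 4 * κ * Q)) (hσbar0 : 0 < σbar)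
    (γ β : ℝ)
    (hγ : γ = min (1 / (24 * L))
      (Real.sqrt (270 * u 0) / (2 * σbar * Real.sqrt (5760 * L * T))))
    (hβ : β = 1 - 24 * L * γ)
    (hR1 : ∀ t < T, u (t + 1) ≤ u t - (γ / 2) * (1 - 4 * γ * L) * Gs t
      + γ * (1 + 2 * γ * L) * v t + γ * (1 + γ * L) * κ * w t)
    (hR2 : ∀ t < T, v (t + 1) ≤ β ^ 2 * (1 + γ * L) * (1 + 4 * γ * L) * v t
      + 4 * γ * L * (1 + γ * L) * β ^ 2 * Gs t + (1 - β) ^ 2 * P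
      + 2 * γ * L * (1 + γ * L) * β ^ 2 * κ * w t)
    (hR3 : ∀ t < T, w (t + 1) ≤ β * w t + 2 * (1 - β) ^ 2 * Q + (1 - β) * G ^ 2) :
    (1 / T : ℝ) * ∑ t ∈ Finset.range T, Gs t
      ≤ 480 * κ * G ^ 2 + Real.sqrt (1555200 * L * u 0) * σbar / Real.sqrt T
        + 270 * L * u 0 / T := by
  have hγ₀ : 0 < γ := by rw [hγ]; exact lt_min (by positivity) (by positivity)
  have hγL : γ * L ≤ 1 / 24 := by
    calc γ * L ≤ 1 / (24 * L) * L := by gcongr; exact hγ.trans_le (min_le_left _ _)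
      _ = 1 / 24 := by field_simp
  have hnoise : P + 2 * κ * Q ≤ σbar ^ 2 := by
    have : 0 ≤ κ * Q := by positivity
    rw [hσbar, Real.sq_sqrt (by positivity)]
    linarith
  have hrec : CafCorRecursion L κ P Q G γ β T u v w Gs := ⟨hR1, hR2, hR3⟩
  have hcost := tuned_step_cost_le hL hu0.le hσbar0.le (Nat.cast_nonneg T)
  rw [← hγ] at hcost
  have hheterogeneity : 0 ≤ κ * G ^ 2 := by positivity
  calc (1 / T : ℝ) * ∑ t ∈ Finset.range T, Gs t
      ≤ 11 / 3 * (u 0 / T) / γ + 96 * L * (P + 2 * κ * Q) * γ + 4 * κ * G ^ 2 :=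
        hrec.average_le hL hκ hγ₀ hγL hβ hT (hu T le_rfl) hv hw (fun t ht => hGs t ht.le) hw0 hv0
    _ ≤ 11 / 3 * (u 0 / T) / γ + 96 * L * σbar ^ 2 * γ + 4 * κ * G ^ 2 := by gcongr
    _ ≤ _ := by linarith
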